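/- arXiv:1409.8041 — 2 statements merged into one kernel-verified Lean document; each statement's English description precedes it below -/
import Mathlib

section
/- Let G be a group, t ∈ G, and K ⊆ G a symmetric subset (K = K⁻¹) with 1 ∈ K satisfying t·K·K·t⁻¹ ⊆ K. Then: (i) t·K·t⁻¹ ⊆ K, so the sets t⁻ⁿ·K·tⁿ (n ∈ ℕ) form an increasing family, and for every k ∈ ℕ one has tᵏ·K^(2ᵏ)·t⁻ᵏ ⊆ K, where K^m denotes the set of products of m elements of K; (ii) if H denotes the subgroup of G generated by the union over n ∈ ℕ of the sets t⁻ⁿ·K·tⁿ, then for every h ∈ H there exists n₀ ∈ ℕ such that tⁿ·h·t⁻ⁿ ∈ K for all n ≥ n₀. -/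
open Pointwise

/-- The purely group-theoretic core of Proposition 4.8. Let `G` be a group, `t ∈ G`, and
`K ⊆ G` a symmetric subset with `1 ∈ K` such that `t * K * K * t⁻¹ ⊆ K`. Then:
(i) `t * K * t⁻¹ ⊆ K`, the sets `t⁻ⁿ * K * tⁿ` form an increasing family, and
`tᵏ * K ^ (2 ^ k) * t⁻ᵏ ⊆ K` for all `k`; (ii) if `H` is the subgroup generated by the union
of the sets `t⁻ⁿ * K * tⁿ`, then every `h ∈ H` satisfies `tⁿ * h * t⁻ⁿ ∈ K` for all
sufficiently large `n`. -/
theorem conjugation_contracts_of_contracting_double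
    {G : Type*} [Group G] (t : G) (K : Set G)
    (hKsym : K = K⁻¹) (hKone : (1 : G) ∈ K)
    (hconj : ∀ a ∈ K, ∀ b ∈ K, t * (a * b) * t⁻¹ ∈ K) :
    ((∀ a ∈ K, t * a * t⁻¹ ∈ K) ∧
      (∀ m n : ℕ, m ≤ n →
        (fun x => (t ^ m)⁻¹ * x * t ^ m) '' K ⊆ (fun x => (t ^ n)⁻¹ * x * t ^ n) '' K) ∧
      (∀ k : ℕ, ∀ x ∈ K ^ (2 ^ k), t ^ k * x * (t ^ k)⁻¹ ∈ K)) ∧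
    (∀ h ∈ Subgroup.closure (⋃ n : ℕ, (fun x => (t ^ n)⁻¹ * x * t ^ n) '' K),
      ∃ n₀ : ℕ, ∀ n : ℕ, n₀ ≤ n → t ^ n * h * (t ^ n)⁻¹ ∈ K) := by
  have h1 : ∀ a ∈ K, t * a * t⁻¹ ∈ K := fun a ha => by
    simpa using hconj a ha 1 hKone
  have hp : ∀ j : ℕ, ∀ a ∈ K, t ^ j * a * (t ^ j)⁻¹ ∈ K := by
    intro j
    induction j with
    | zero => intro a ha; simpa using ha
    | succ j ih =>
      intro a ha
      have := h1 _ (ih a ha)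
      have e : t ^ (j + 1) * a * (t ^ (j + 1))⁻¹ = t * (t ^ j * a * (t ^ j)⁻¹) * t⁻¹ := by
        rw [pow_succ']; group
      rw [e]; exact this
  refine ⟨⟨h1, ?_, ?_⟩, ?_⟩
  · rintro m n hmn _ ⟨x, hx, rfl⟩
    obtain ⟨j, rfl⟩ := Nat.exists_eq_add_of_le hmn
    refine ⟨t ^ j * x * (t ^ j)⁻¹, hp j x hx, ?_⟩
    have e : t ^ (m + j) = t ^ j * t ^ m := by rw [add_comm, pow_add]
    simp only [e, mul_inv_rev]
    simp only [mul_assoc, inv_mul_cancel_left]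
  · intro k
    induction k with
    | zero => intro x hx; simpa using hx
    | succ k ih =>
      intro x hx
      rw [pow_succ 2 k, mul_two, pow_add] at hx
      obtain ⟨a, ha, b, hb, rfl⟩ := Set.mem_mul.1 hx
      have := hconj _ (ih a ha) _ (ih b hb)
      have e : t ^ (k + 1) * (a * b) * (t ^ (k + 1))⁻¹ =
          t * ((t ^ k * a * (t ^ k)⁻¹) * (t ^ k * b * (t ^ k)⁻¹)) * t⁻¹ := by
        rw [pow_succ', mul_inv_rev]
        simp only [mul_assoc, inv_mul_cancel_left]
      rw [e]; exact this
  · intro h hh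
    induction hh using Subgroup.closure_induction with
    | mem x hx =>
      obtain ⟨m, y, hy, rfl⟩ := Set.mem_iUnion.1 hx
      refine ⟨m, fun n hn => ?_⟩
      obtain ⟨j, rfl⟩ := Nat.exists_eq_add_of_le hn
      have e : t ^ (m + j) = t ^ j * t ^ m := by rw [add_comm, pow_add]
      have := hp j y hy
      simp only [e, mul_inv_rev]
      simpa only [mul_assoc, mul_inv_cancel_left] using this
    | one => exact ⟨0, fun n _ => by simpa using hKone⟩
    | mul x y _ _ hx hy =>
      obtain ⟨a, ha⟩ := hx
      obtain ⟨b, hb⟩ := hy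
      refine ⟨max a b + 1, fun n hn => ?_⟩
      obtain ⟨k, rfl⟩ : ∃ k, n = k + 1 := ⟨n - 1, by omega⟩
      have := hconj _ (ha k (by omega)) _ (hb k (by omega))
      have e : t ^ (k + 1) * (x * y) * (t ^ (k + 1))⁻¹ =
          t * ((t ^ k * x * (t ^ k)⁻¹) * (t ^ k * y * (t ^ k)⁻¹)) * t⁻¹ := by
        rw [pow_succ', mul_inv_rev]
        simp only [mul_assoc, inv_mul_cancel_left]
      rw [e]; exact this
    | inv x _ hx =>
      obtain ⟨a, ha⟩ := hx
      refine ⟨a, fun n hn => ?_⟩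
      rw [hKsym, Set.mem_inv]
      have := ha n hn
      simpa only [mul_inv_rev, inv_inv, mul_assoc] using this
end

section
/- Let (X, d) be a metric space with a basepoint e ∈ X, and let c > 0 be such that X is c-coarsely connected. Assume X is unbounded: for every r ∈ ℝ there exists x ∈ X with d(e, x) > r. Then for every real ℓ > 0 and every sequence s : ℕ → ℝ of positive reals tending to +∞, there exists a sequence x : ℕ → X such that d(e, xₙ) ≤ ℓ·sₙ + c for every n and the sequence d(e, xₙ)/sₙ converges to ℓ as n → ∞ (in particular its limit along every nonprincipal ultrafilter on ℕ equals ℓ, so every asymptotic cone of X contains a point at distance exactly ℓ from the basepoint). -/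
open Filter

/-- **Lemma 3.2** (sequential form). Let `(X, d)` be an unbounded `c`-coarsely connected
metric space with basepoint `e`. Then for every `ℓ > 0` and every scaling sequence `s`
(positive reals tending to `+∞`) there is a sequence `x : ℕ → X` with
`dist e (x n) ≤ ℓ * s n + c` for all `n` and `dist e (x n) / s n → ℓ`; in particular every
asymptotic cone of `X` contains a point at distance exactly `ℓ` from the basepoint. -/
theorem exists_sequence_at_cone_distance
    {X : Type*} [MetricSpace X] (e : X) (c : ℝ) (hc : 0 < c)
    (hconn : ∀ x y : X, ∃ (n : ℕ) (f : ℕ → X), f 0 = x ∧ f n = y ∧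
      ∀ i < n, dist (f i) (f (i + 1)) ≤ c)
    (hunb : ∀ r : ℝ, ∃ x : X, r < dist e x) :
    ∀ ℓ : ℝ, 0 < ℓ → ∀ s : ℕ → ℝ, (∀ n, 0 < s n) → Tendsto s atTop atTop →
      ∃ x : ℕ → X, (∀ n, dist e (x n) ≤ ℓ * s n + c) ∧
        Tendsto (fun n => dist e (x n) / s n) atTop (nhds ℓ) := by
  classical
  have key : ∀ r : ℝ, 0 < r → ∃ x : X, r < dist e x ∧ dist e x ≤ r + c := by
    intro r hr
    obtain ⟨y, hy⟩ := hunb r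
    obtain ⟨n, f, h0, hn, hf⟩ := hconn e y
    have hex : ∃ k, r < dist e (f k) := ⟨n, by rw [hn]; exact hy⟩
    have hspec := Nat.find_spec hex
    have hle : Nat.find hex ≤ n := Nat.find_min' hex (by rw [hn]; exact hy)
    have hmin : ∀ m < Nat.find hex, ¬ r < dist e (f m) := fun m hm => Nat.find_min hex hm
    generalize Nat.find hex = k at hspec hle hmin
    cases k with
    | zero =>
      rw [h0, dist_self] at hspec
      linarith
    | succ m =>
      refine ⟨f (m + 1), hspec, ?_⟩
      have h1 := hmin m (Nat.lt_succ_self m)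
      have h2 := hf m (by omega)
      have h3 := dist_triangle e (f m) (f (m + 1))
      linarith
  intro l hl s hs hst
  choose x hx1 hx2 using fun n => key (l * s n) (mul_pos hl (hs n))
  refine ⟨x, hx2, ?_⟩
  have hlim : Tendsto (fun n => l + c / s n) atTop (nhds l) := by
    simpa using (tendsto_const_nhds (x := l)).add (hst.const_div_atTop c)
  refine tendsto_of_tendsto_of_tendsto_of_le_of_le tendsto_const_nhds hlim ?_ ?_
  · intro n
    exact (le_div_iff₀ (hs n)).2 (hx1 n).le
  · intro n
    have hn := hs n
    refine (div_le_iff₀ hn).2 ?_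
    have : (l + c / s n) * s n = l * s n + c := by
      field_simp
    rw [this]
    exact hx2 n
end
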